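/- Let n ≥ 1, let μ be a Borel probability measure on ℝ^{n×n} with bounded support whose support leaves a proper cone K ⊆ ℝⁿ invariant, and let M = supp μ. For M ∈ ℝ^{n×n} write S_M := {A ∈ ℝ^{n×n} : A − M leaves K invariant}. Suppose N ⊆ M is a measurable nonempty set with the property that for every ε > 0 there exists δ > 0 such that μ(S_{(1−ε)M}) ≥ δ for every M ∈ N. Then ρ̂(N) ≤ lim_{p→∞} ρ_{p,μ}. -/

import Mathlib

open MeasureTheory Filter Topology
open scoped ENNReal RealInnerProductSpace

noncomputable section

/-- The space of real `n × n` matrices. -/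
abbrev Mat (n : ℕ) := Matrix (Fin n) (Fin n) ℝ

/-- Euclidean space `ℝⁿ`. -/
abbrev EucSp (n : ℕ) := EuclideanSpace ℝ (Fin n)

/-- The (Borel = product) measurable structure on `n × n` real matrices. -/
instance matMeasurableSpace (n : ℕ) : MeasurableSpace (Mat n) :=
  inferInstanceAs (MeasurableSpace (Fin n → Fin n → ℝ))

/-- Lebesgue measure on the space of `n × n` real matrices `≅ ℝ^{n²}`. -/
def matLebesgue (n : ℕ) : Measure (Mat n) :=
  (inferInstance : MeasureSpace (Fin n → Fin n → ℝ)).volume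

/-- The operator norm (maximal singular value) of a real square matrix, induced by the
Euclidean norm. -/
def opNorm {m : ℕ} (A : Matrix (Fin m) (Fin m) ℝ) : ℝ :=
  ‖LinearMap.toContinuousLinearMap (Matrix.toEuclideanLin A)‖

/-- The product `A_k ⋯ A_1` of the matrices `f 0 = A_1, …, f (k-1) = A_k` (decreasing order of
indices). -/
def prodRev {m k : ℕ} (f : Fin k → Matrix (Fin m) (Fin m) ℝ) : Matrix (Fin m) (Fin m) ℝ :=
  ((List.ofFn f).reverse).prod

/-- The joint spectral radius of a set of matrices:
`ρ̂(M) = limsup_{k→∞} sup_{A₁,…,A_k ∈ M} ‖A_k ⋯ A₁‖^(1/k)`. -/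
def jsr {m : ℕ} (M : Set (Matrix (Fin m) (Fin m) ℝ)) : ℝ :=
  limsup (fun k : ℕ =>
    sSup {x : ℝ | ∃ f : Fin k → Matrix (Fin m) (Fin m) ℝ,
      (∀ i, f i ∈ M) ∧ x = opNorm (prodRev f)} ^ ((1 : ℝ) / k)) atTop

/-- `E[‖A_k ⋯ A₁‖^p]` where `A₁, …, A_k` are i.i.d. with law `μ`. -/
def kExpNorm {m : ℕ} (μ : Measure (Mat m)) (p k : ℕ) : ℝ :=
  ∫ f : Fin k → Mat m, opNorm (prodRev f) ^ p ∂(Measure.pi fun _ => μ)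

/-- The `L^p`-norm joint spectral radius (`p`-radius) of a probability distribution `μ`:
`ρ_{p,μ} = lim_{k→∞} (E[‖A_k ⋯ A₁‖^p])^{1/(pk)}`; since this limit exists for distributions
with bounded support, it coincides with the `limsup` used here. -/
def pRadius {m : ℕ} (μ : Measure (Mat m)) (p : ℕ) : ℝ :=
  limsup (fun k : ℕ => kExpNorm μ p k ^ (1 / (p * k : ℝ))) atTop

/-- The (topological) support of a measure on matrices. -/
def msupport {m : ℕ} (μ : Measure (Mat m)) : Set (Mat m) :=
  {A | ∀ ε : ℝ, 0 < ε → μ {B | opNorm (B - A) < ε} ≠ 0}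

/-- `μ` has bounded support. -/
def HasBoundedSupport {m : ℕ} (μ : Measure (Mat m)) : Prop :=
  ∃ C : ℝ, ∀ A ∈ msupport μ, opNorm A ≤ C

/-- A proper cone of `ℝⁿ`: a closed convex pointed cone with nonempty interior. -/
structure IsProperCone {m : ℕ} (K : Set (EucSp m)) : Prop where
  isClosed : IsClosed K
  convex : Convex ℝ K
  smul_mem : ∀ c : ℝ, 0 ≤ c → ∀ x ∈ K, c • x ∈ K
  pointed : ∀ x ∈ K, -x ∈ K → x = 0
  solid : (interior K).Nonempty

/-- A matrix `A` leaves a cone `K` invariant: `A K ⊆ K`. -/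
def LeavesInv {m : ℕ} (A : Matrix (Fin m) (Fin m) ℝ) (K : Set (EucSp m)) : Prop :=
  ∀ x ∈ K, Matrix.toEuclideanLin A x ∈ K

/-- A set of matrices leaves a cone invariant if each of its members does. -/
def SetLeavesInv {m : ℕ} (S : Set (Matrix (Fin m) (Fin m) ℝ)) (K : Set (EucSp m)) : Prop :=
  ∀ A ∈ S, LeavesInv A K

/-- `π(K)`: the set of matrices leaving the cone `K` invariant. -/
def piCone {m : ℕ} (K : Set (EucSp m)) : Set (Mat m) := {A | LeavesInv A K}

/-- Distance (valued in `ℝ≥0∞`, with `d(A, ∅) = ∞`) from a matrix to a set of matrices, in the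
operator norm. -/
def edistSet {m : ℕ} (A : Mat m) (S : Set (Mat m)) : ℝ≥0∞ :=
  ⨅ B ∈ S, ENNReal.ofReal (opNorm (A - B))

/-- Hausdorff distance between two sets of matrices (operator norm, valued in `ℝ≥0∞`). -/
def hausdorffDistE {m : ℕ} (S T : Set (Mat m)) : ℝ≥0∞ :=
  max (⨆ A ∈ S, edistSet A T) (⨆ B ∈ T, edistSet B S)

/-- `S_M = {A : A − M leaves K invariant}`, i.e. `{A : A ≥^K M}`. -/
def matSSet {m : ℕ} (K : Set (EucSp m)) (M : Mat m) : Set (Mat m) :=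
  {A | LeavesInv (A - M) K}

/-- `π_r = {M ∈ π(K) : d(M, ∂π(K)) ≥ r}`. -/
def piConeR {m : ℕ} (K : Set (EucSp m)) (r : ℝ) : Set (Mat m) :=
  {M | M ∈ piCone K ∧ ENNReal.ofReal r ≤ edistSet M (frontier (piCone K))}

/-- `M_r = (π_r ∩ supp μ_c) ∪ supp μ_s`. -/
def MrSet {m : ℕ} (K : Set (EucSp m)) (μc μs : Measure (Mat m)) (r : ℝ) : Set (Mat m) :=
  (piConeR K r ∩ msupport μc) ∪ msupport μs

/-- The measure `ν` is zero or a finite linear combination (with positive coefficients) of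
Dirac measures. -/
def IsFiniteDiracComb {m : ℕ} (ν : Measure (Mat m)) : Prop :=
  ν = 0 ∨ ∃ (N : ℕ) (w : Fin N → ℝ) (Ms : Fin N → Mat m),
    (∀ i, 0 < w i) ∧ ν = ∑ i, ENNReal.ofReal (w i) • Measure.dirac (Ms i)

/-- The `p`-th Kronecker power of a square matrix (with `A^{⊗0} = 1`, `A^{⊗(p+1)} = A^{⊗p} ⊗ A`). -/
def kronPow {m : ℕ} (A : Matrix (Fin m) (Fin m) ℝ) :
    (p : ℕ) → Matrix (Fin (m ^ p)) (Fin (m ^ p)) ℝ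
  | 0 => 1
  | p + 1 =>
    Matrix.reindex (finProdFinEquiv.trans (finCongr (pow_succ m p).symm))
      (finProdFinEquiv.trans (finCongr (pow_succ m p).symm))
      (Matrix.kroneckerMap (· * ·) (kronPow A p) A)

/-- The `q`-th Kronecker power of a vector. -/
def vecKronPow {m : ℕ} (x : EucSp m) : (q : ℕ) → EucSp (m ^ q)
  | 0 => WithLp.toLp 2 fun _ => 1
  | q + 1 => WithLp.toLp 2 fun i =>
      vecKronPow x q (finProdFinEquiv.symm (finCongr (pow_succ m q) i)).1 *
        x (finProdFinEquiv.symm (finCongr (pow_succ m q) i)).2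

/-- The spectral radius of a real square matrix: the largest modulus of a complex eigenvalue. -/
def specRad {m : ℕ} (A : Matrix (Fin m) (Fin m) ℝ) : ℝ :=
  sSup ((fun z : ℂ => ‖z‖) '' spectrum ℂ (A.map Complex.ofReal))

/-- The entrywise expectation `E[A^{⊗p}]` of the `p`-th Kronecker power under `μ`. -/
def kronExp {m : ℕ} (μ : Measure (Mat m)) (p : ℕ) :
    Matrix (Fin (m ^ p)) (Fin (m ^ p)) ℝ :=
  Matrix.of fun i j => ∫ A, kronPow A p i j ∂μ

/-- `V` is a stochastic Lyapunov function for `μ` of degree `p` with growth rate `γ`. -/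
def IsStochLyap {m : ℕ} (μ : Measure (Mat m)) (p : ℕ) (γ : ℝ) (V : EucSp m → ℝ) : Prop :=
  (∃ C₁ : ℝ, 0 < C₁ ∧ ∃ C₂ : ℝ, 0 < C₂ ∧
    ∀ x : EucSp m, C₁ * ‖x‖ ^ p ≤ V x ∧ V x ≤ C₂ * ‖x‖ ^ p) ∧
  ∀ x : EucSp m, (∫ A, V (Matrix.toEuclideanLin A x) ∂μ) ≤ γ ^ p * V x

/-- `ν` is a norm on `ℝ^m`. -/
def IsNormFn {m : ℕ} (ν : EucSp m → ℝ) : Prop :=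
  (∀ x, 0 ≤ ν x) ∧ (∀ x, ν x = 0 ↔ x = 0) ∧
  (∀ (a : ℝ) (x : EucSp m), ν (a • x) = |a| * ν x) ∧
  (∀ x y : EucSp m, ν (x + y) ≤ ν x + ν y)

/-- `ν` is cone absolute with respect to `K`:
`ν x = inf {ν (v + w) : v, w ∈ K, x = v − w}`. -/
def IsConeAbsolute {m : ℕ} (K : Set (EucSp m)) (ν : EucSp m → ℝ) : Prop :=
  ∀ x : EucSp m, ν x = sInf {r : ℝ | ∃ v ∈ K, ∃ w ∈ K, x = v - w ∧ r = ν (v + w)}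

/-- The dual cone `K* = {f : fᵀx ≥ 0 for all x ∈ K}`. -/
def dualConeSet {m : ℕ} (K : Set (EucSp m)) : Set (EucSp m) :=
  {f | ∀ x ∈ K, 0 ≤ ⟪f, x⟫}

/-- `ν` is cone linear with respect to `K`: `ν = ⟪f, ·⟫` on `K` for some `f ∈ K*`. -/
def IsConeLinear {m : ℕ} (K : Set (EucSp m)) (ν : EucSp m → ℝ) : Prop :=
  ∃ f ∈ dualConeSet K, ∀ x ∈ K, ν x = ⟪f, x⟫

/-- The matrix norm induced by a norm `ν` on `ℝ^m`. -/
def inducedNormFn {m : ℕ} (ν : EucSp m → ℝ) (A : Matrix (Fin m) (Fin m) ℝ) : ℝ :=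
  sSup {c : ℝ | ∃ x : EucSp m, x ≠ 0 ∧ c = ν (Matrix.toEuclideanLin A x) / ν x}

instance matBorelSpace (n : ℕ) : BorelSpace (Mat n) :=
  inferInstanceAs (BorelSpace (Fin n → Fin n → ℝ))

instance matSecondCountableTopology (n : ℕ) : SecondCountableTopology (Mat n) :=
  inferInstanceAs (SecondCountableTopology (Fin n → Fin n → ℝ))

section OperatorNorm

variable {m : ℕ}

lemma opNorm_nonneg (A : Mat m) : 0 ≤ opNorm A := norm_nonneg _

lemma norm_toEuclideanLin_le (A : Mat m) (x : EucSp m) :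
    ‖Matrix.toEuclideanLin A x‖ ≤ opNorm A * ‖x‖ :=
  (LinearMap.toContinuousLinearMap (Matrix.toEuclideanLin A)).le_opNorm x

lemma toEuclideanLin_mul_apply (A B : Mat m) (x : EucSp m) :
    Matrix.toEuclideanLin (A * B) x = Matrix.toEuclideanLin A (Matrix.toEuclideanLin B x) := by
  simp [Matrix.toLpLin_apply, Matrix.mulVec_mulVec]

lemma opNorm_mul_le (A B : Mat m) : opNorm (A * B) ≤ opNorm A * opNorm B := by
  refine ContinuousLinearMap.opNorm_le_bound _
    (mul_nonneg (opNorm_nonneg A) (opNorm_nonneg B)) fun x => ?_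
  change ‖Matrix.toEuclideanLin (A * B) x‖ ≤ _
  rw [toEuclideanLin_mul_apply, mul_assoc]
  exact (norm_toEuclideanLin_le A _).trans
    (mul_le_mul_of_nonneg_left (norm_toEuclideanLin_le B x) (opNorm_nonneg A))

lemma opNorm_one_le : opNorm (1 : Mat m) ≤ 1 := by
  refine ContinuousLinearMap.opNorm_le_bound _ zero_le_one fun x => ?_
  change ‖Matrix.toEuclideanLin (1 : Mat m) x‖ ≤ _
  simp

lemma opNorm_smul (c : ℝ) (A : Mat m) : opNorm (c • A) = |c| * opNorm A := by
  simp [opNorm, norm_smul]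

lemma continuous_opNorm : Continuous (opNorm : Mat m → ℝ) := by
  have h : Continuous fun A : Mat m =>
      (LinearMap.toContinuousLinearMap : (EucSp m →ₗ[ℝ] EucSp m) ≃ₗ[ℝ] _)
        (Matrix.toEuclideanLin A) :=
    LinearMap.continuous_of_finiteDimensional
      ((LinearMap.toContinuousLinearMap : (EucSp m →ₗ[ℝ] EucSp m) ≃ₗ[ℝ] _).toLinearMap ∘ₗ
        (Matrix.toEuclideanLin : Mat m ≃ₗ[ℝ] _).toLinearMap)
  exact h.norm

end OperatorNorm

section Products

variable {m : ℕ}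

lemma prodRev_zero (f : Fin 0 → Mat m) : prodRev f = 1 := by simp [prodRev]

lemma prodRev_succ {k : ℕ} (f : Fin (k + 1) → Mat m) :
    prodRev f = prodRev (fun i => f i.succ) * f 0 := by
  simp [prodRev, List.ofFn_succ]

lemma continuous_prodRev (k : ℕ) : Continuous (prodRev : (Fin k → Mat m) → Mat m) := by
  induction k with
  | zero => exact continuous_const.congr fun f => (prodRev_zero f).symm
  | succ k ih =>
    refine Continuous.congr ?_ fun f => (prodRev_succ f).symm
    exact (ih.comp (by fun_prop : Continuous fun f : Fin (k + 1) → Mat m =>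
      fun i : Fin k => f i.succ)).matrix_mul (continuous_apply 0)

lemma opNorm_prodRev_le {C : ℝ} (hC : 0 ≤ C) {k : ℕ} (f : Fin k → Mat m)
    (hf : ∀ i, opNorm (f i) ≤ C) : opNorm (prodRev f) ≤ C ^ k := by
  induction k with
  | zero => simpa [prodRev_zero] using opNorm_one_le (m := m)
  | succ k ih =>
    rw [prodRev_succ, pow_succ]
    exact (opNorm_mul_le _ _).trans (mul_le_mul (ih _ fun i => hf i.succ) (hf 0)
      (opNorm_nonneg _) (pow_nonneg hC k))

lemma prodRev_smul (c : ℝ) {k : ℕ} (f : Fin k → Mat m) :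
    prodRev (fun i => c • f i) = c ^ k • prodRev f := by
  induction k with
  | zero => simp [prodRev_zero]
  | succ k ih =>
    rw [prodRev_succ, prodRev_succ, ih, smul_mul_smul_comm, pow_succ]

end Products

section Cones

variable {m : ℕ} {K : Set (EucSp m)}

lemma IsProperCone.add_mem (hK : IsProperCone K) {x y : EucSp m} (hx : x ∈ K) (hy : y ∈ K) :
    x + y ∈ K := by
  have h := hK.smul_mem 2 zero_le_two _
    (hK.convex hx hy (by norm_num : (0 : ℝ) ≤ 1 / 2) (by norm_num : (0 : ℝ) ≤ 1 / 2) (by norm_num))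
  rwa [← smul_add, smul_smul, show (2 : ℝ) * (1 / 2) = 1 by norm_num, one_smul] at h

/-- Proper cones are normal. -/
lemma IsProperCone.exists_norm_le_mul_norm_add (hK : IsProperCone K) :
    ∃ κ : ℝ, 0 < κ ∧ ∀ x ∈ K, ∀ z ∈ K, ‖x‖ ≤ κ * ‖x + z‖ := by
  have hdisj : Disjoint (K ∩ Metric.sphere 0 1) (-K) := by
    rw [Set.disjoint_left]
    rintro x ⟨hx, hx1⟩ hxn
    have h0 := hK.pointed x hx hxn
    simp [h0] at hx1
  obtain ⟨r, hr, h⟩ := Metric.exists_pos_forall_lt_edist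
    ((isCompact_sphere (0 : EucSp m) 1).inter_left hK.isClosed) hK.isClosed.neg hdisj
  refine ⟨(r : ℝ)⁻¹, by positivity, fun x hx z hz => ?_⟩
  rcases eq_or_ne x 0 with rfl | hx0
  · simp; positivity
  have hxpos : 0 < ‖x‖ := norm_pos_iff.2 hx0
  have h1 := h (‖x‖⁻¹ • x)
    ⟨hK.smul_mem _ (by positivity) x hx, by simp [norm_smul, hxpos.ne']⟩
    (-(‖x‖⁻¹ • z)) (by simpa using hK.smul_mem _ (by positivity) z hz)
  rw [edist_nndist, ENNReal.coe_lt_coe, ← NNReal.coe_lt_coe, coe_nndist, dist_eq_norm,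
    sub_neg_eq_add, ← smul_add, norm_smul, norm_inv, norm_norm] at h1
  rw [inv_mul_eq_div, lt_div_iff₀ hxpos] at h1
  rw [inv_mul_eq_div, le_div_iff₀ (by positivity)]
  linarith

/-- The operator norm is monotone, up to a constant, for the order induced by a proper cone. -/
lemma IsProperCone.exists_opNorm_le_mul (hK : IsProperCone K) :
    ∃ c : ℝ, 0 < c ∧ ∀ A B : Mat m, LeavesInv B K → LeavesInv (A - B) K →
      opNorm B ≤ c * opNorm A := by
  obtain ⟨κ, hκ, hnorm⟩ := hK.exists_norm_le_mul_norm_add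
  obtain ⟨e, he⟩ := hK.solid
  obtain ⟨r, hr, hball⟩ := Metric.nhds_basis_closedBall.mem_iff.1 (mem_interior_iff_mem_nhds.1 he)
  refine ⟨κ * (‖e‖ + r) / r, by positivity, fun A B hB hAB => ?_⟩
  have hbound : ∀ y ∈ K, ‖Matrix.toEuclideanLin B y‖ ≤ κ * (opNorm A * ‖y‖) := fun y hy => by
    have h := hnorm _ (hB y hy) _ (hAB y hy)
    rw [map_sub, LinearMap.sub_apply, add_sub_cancel] at h
    exact h.trans (mul_le_mul_of_nonneg_left (norm_toEuclideanLin_le A y) hκ.le)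
  have hA := opNorm_nonneg A
  refine ContinuousLinearMap.opNorm_le_of_unit_norm (by positivity) fun x hx => ?_
  change ‖Matrix.toEuclideanLin B x‖ ≤ _
  have hrx : ‖r • x‖ = r := by simp [norm_smul, hx, hr.le]
  have hp : e + r • x ∈ K := hball (by simp [hrx])
  have hq : e - r • x ∈ K := hball (by simp [hrx])
  have hp' : ‖Matrix.toEuclideanLin B (e + r • x)‖ ≤ κ * (opNorm A * (‖e‖ + r)) :=
    (hbound _ hp).trans (by gcongr; exact (norm_add_le _ _).trans_eq (by rw [hrx]))
  have hq' : ‖Matrix.toEuclideanLin B (e - r • x)‖ ≤ κ * (opNorm A * (‖e‖ + r)) :=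
    (hbound _ hq).trans (by gcongr; exact (norm_sub_le _ _).trans_eq (by rw [hrx]))
  have hdiff : Matrix.toEuclideanLin B (e + r • x) - Matrix.toEuclideanLin B (e - r • x)
      = (2 * r) • Matrix.toEuclideanLin B x := by
    simp only [map_add, map_sub, map_smul]
    module
  have h2 := norm_sub_le (Matrix.toEuclideanLin B (e + r • x))
    (Matrix.toEuclideanLin B (e - r • x))
  rw [hdiff, norm_smul, Real.norm_of_nonneg (by positivity)] at h2
  rw [div_mul_eq_mul_div, le_div_iff₀ hr]
  linarith

lemma LeavesInv.mul {A B : Mat m} (hA : LeavesInv A K) (hB : LeavesInv B K) :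
    LeavesInv (A * B) K := fun x hx => by
  rw [toEuclideanLin_mul_apply]
  exact hA _ (hB x hx)

lemma LeavesInv.add (hK : IsProperCone K) {A B : Mat m} (hA : LeavesInv A K)
    (hB : LeavesInv B K) : LeavesInv (A + B) K := fun x hx => by
  rw [map_add, LinearMap.add_apply]
  exact hK.add_mem (hA x hx) (hB x hx)

lemma LeavesInv.smul (hK : IsProperCone K) {A : Mat m} (hA : LeavesInv A K) {c : ℝ}
    (hc : 0 ≤ c) : LeavesInv (c • A) K := fun x hx => by
  rw [map_smul, LinearMap.smul_apply]
  exact hK.smul_mem c hc _ (hA x hx)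

/-- Products are monotone for the order induced by a proper cone. -/
lemma leavesInv_prodRev_sub (hK : IsProperCone K) {k : ℕ} (f g : Fin k → Mat m)
    (hg : ∀ i, LeavesInv (g i) K) (hfg : ∀ i, LeavesInv (f i - g i) K) :
    LeavesInv (prodRev g) K ∧ LeavesInv (prodRev f - prodRev g) K := by
  induction k with
  | zero =>
    obtain ⟨e, he⟩ := hK.solid
    have h0 : (0 : EucSp m) ∈ K := by
      simpa using hK.smul_mem 0 le_rfl e (interior_subset he)
    refine ⟨fun x hx => ?_, fun x hx => ?_⟩
    · simpa [prodRev_zero, Matrix.toLpLin_apply] using hx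
    · simpa [prodRev_zero] using h0
  | succ k ih =>
    obtain ⟨h1, h2⟩ := ih (fun i => f i.succ) (fun i => g i.succ) (fun i => hg _) (fun i => hfg _)
    rw [prodRev_succ f, prodRev_succ g]
    refine ⟨h1.mul (hg 0), ?_⟩
    have hf0 : LeavesInv (f 0) K := by simpa using (hfg 0).add hK (hg 0)
    convert (h2.mul hf0).add hK (h1.mul (hfg 0)) using 1
    noncomm_ring

end Cones

section Moments

variable {m : ℕ} {μ : Measure (Mat m)}

lemma ae_mem_msupport (μ : Measure (Mat m)) : ∀ᵐ A ∂μ, A ∈ msupport μ := by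
  refine measure_null_of_locally_null _ fun A hA => ?_
  simp only [Set.mem_compl_iff, Set.mem_ofPred_eq, msupport, not_forall, not_not] at hA
  obtain ⟨ε, hε, h⟩ := hA
  refine ⟨_, mem_nhdsWithin_of_mem_nhds ?_, h⟩
  refine (isOpen_lt (continuous_opNorm.comp (continuous_id.sub continuous_const))
    continuous_const).mem_nhds ?_
  simpa [opNorm] using hε

variable [IsProbabilityMeasure μ]

lemma ae_pi_mem_msupport (k : ℕ) :
    ∀ᵐ f : Fin k → Mat m ∂(Measure.pi fun _ => μ), ∀ i, f i ∈ msupport μ :=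
  eventually_all.2 fun i =>
    (Measure.tendsto_eval_ae_ae (μ := fun _ : Fin k => μ) (i := i)).eventually (ae_mem_msupport μ)

variable {C : ℝ}

lemma ae_opNorm_prodRev_le (hC : 0 ≤ C) (hb : ∀ A ∈ msupport μ, opNorm A ≤ C) (k : ℕ) :
    ∀ᵐ f : Fin k → Mat m ∂(Measure.pi fun _ => μ), opNorm (prodRev f) ≤ C ^ k := by
  filter_upwards [ae_pi_mem_msupport (μ := μ) k] with f hf
  exact opNorm_prodRev_le hC f fun i => hb _ (hf i)

lemma integrable_opNorm_prodRev_pow (hC : 0 ≤ C) (hb : ∀ A ∈ msupport μ, opNorm A ≤ C)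
    (p k : ℕ) : Integrable (fun f : Fin k → Mat m => opNorm (prodRev f) ^ p)
      (Measure.pi fun _ => μ) := by
  refine Integrable.of_bound
    ((continuous_opNorm.comp (continuous_prodRev k)).pow p).aestronglyMeasurable ((C ^ k) ^ p) ?_
  filter_upwards [ae_opNorm_prodRev_le hC hb k] with f hf
  rw [Real.norm_of_nonneg (pow_nonneg (opNorm_nonneg _) p)]
  exact pow_le_pow_left₀ (opNorm_nonneg _) hf p

lemma kExpNorm_nonneg (μ : Measure (Mat m)) (p k : ℕ) : 0 ≤ kExpNorm μ p k :=
  integral_nonneg fun _ => pow_nonneg (opNorm_nonneg _) p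

lemma kExpNorm_le (hC : 0 ≤ C) (hb : ∀ A ∈ msupport μ, opNorm A ≤ C) (p k : ℕ) :
    kExpNorm μ p k ≤ (C ^ k) ^ p := by
  have h := integral_mono_ae (integrable_opNorm_prodRev_pow hC hb p k)
    (integrable_const ((C ^ k) ^ p)) (by
      filter_upwards [ae_opNorm_prodRev_le hC hb k] with f hf
      exact pow_le_pow_left₀ (opNorm_nonneg _) hf p)
  simpa [kExpNorm] using h

lemma kExpNorm_rpow_le (hC : 0 ≤ C) (hb : ∀ A ∈ msupport μ, opNorm A ≤ C) {p k : ℕ}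
    (hp : p ≠ 0) (hk : k ≠ 0) : kExpNorm μ p k ^ (1 / (p * k : ℝ)) ≤ C := by
  refine (Real.rpow_le_rpow (kExpNorm_nonneg μ p k) (kExpNorm_le hC hb p k)
    (by positivity)).trans_eq ?_
  rw [← pow_mul, one_div, show (p * k : ℝ) = ((k * p : ℕ) : ℝ) by push_cast; ring]
  exact Real.pow_rpow_inv_natCast hC (by positivity)

lemma kExpNorm_rpow_mono (hC : 0 ≤ C) (hb : ∀ A ∈ msupport μ, opNorm A ≤ C) {p q k : ℕ}
    (hp : p ≠ 0) (hpq : p ≤ q) (hk : k ≠ 0) :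
    kExpNorm μ p k ^ (1 / (p * k : ℝ)) ≤ kExpNorm μ q k ^ (1 / (q * k : ℝ)) := by
  have hp0 : (0 : ℝ) < p := by positivity
  have hq0 : (0 : ℝ) < q := hp0.trans_le (by exact_mod_cast hpq)
  have hk0 : (0 : ℝ) < k := by positivity
  have hcomp : ∀ f : Fin k → Mat m,
      (opNorm (prodRev f) ^ p) ^ ((q : ℝ) / p) = opNorm (prodRev f) ^ q := fun f => by
    rw [← Real.rpow_natCast, ← Real.rpow_mul (opNorm_nonneg _), mul_div_cancel₀ _ hp0.ne',
      Real.rpow_natCast]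
  have hjensen := (convexOn_rpow (p := (q : ℝ) / p)
    ((one_le_div hp0).2 (by exact_mod_cast hpq))).map_integral_le
    (μ := Measure.pi fun _ : Fin k => μ) (f := fun f => opNorm (prodRev f) ^ p)
    (Real.continuous_rpow_const (by positivity)).continuousOn isClosed_Ici
    (Eventually.of_forall fun f => pow_nonneg (opNorm_nonneg _) p)
    (integrable_opNorm_prodRev_pow hC hb p k)
    ((integrable_opNorm_prodRev_pow hC hb q k).congr
      (Eventually.of_forall fun f => (hcomp f).symm))
  simp only [hcomp] at hjensen
  have h := Real.rpow_le_rpow (Real.rpow_nonneg (kExpNorm_nonneg μ p k) _) hjensen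
    (by positivity : (0 : ℝ) ≤ 1 / (q * k))
  refine Eq.trans_le ?_ h
  rw [← Real.rpow_mul (kExpNorm_nonneg μ p k)]
  congr 1
  field_simp

lemma isBoundedUnder_kExpNorm_rpow (hC : 0 ≤ C) (hb : ∀ A ∈ msupport μ, opNorm A ≤ C) {p : ℕ}
    (hp : p ≠ 0) :
    IsBoundedUnder (· ≤ ·) atTop fun k : ℕ => kExpNorm μ p k ^ (1 / (p * k : ℝ)) := by
  refine isBoundedUnder_of_eventually_le (a := C) ?_
  filter_upwards [eventually_ne_atTop 0] with k hk using kExpNorm_rpow_le hC hb hp hk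

lemma isCoboundedUnder_kExpNorm_rpow (μ : Measure (Mat m)) (p : ℕ) :
    IsCoboundedUnder (· ≤ ·) atTop fun k : ℕ => kExpNorm μ p k ^ (1 / (p * k : ℝ)) :=
  isCoboundedUnder_le_of_le atTop (x := 0) fun k => Real.rpow_nonneg (kExpNorm_nonneg μ p k) _

/-- The `p`-radii of a measure with bounded support converge. -/
lemma exists_tendsto_pRadius (hC : 0 ≤ C) (hb : ∀ A ∈ msupport μ, opNorm A ≤ C) :
    ∃ L : ℝ, Tendsto (fun p : ℕ => pRadius μ p) atTop (𝓝 L) := by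
  refine ⟨⨆ p : ℕ, pRadius μ (p + 1), (tendsto_add_atTop_iff_nat 1).1
    (tendsto_atTop_ciSup (fun p q hpq => ?_) ⟨C, ?_⟩)⟩
  · refine limsup_le_limsup ?_ (isCoboundedUnder_kExpNorm_rpow μ _)
      (isBoundedUnder_kExpNorm_rpow hC hb q.succ_ne_zero)
    filter_upwards [eventually_ne_atTop 0] with k hk
    exact kExpNorm_rpow_mono hC hb p.succ_ne_zero (by omega) hk
  · rintro _ ⟨p, rfl⟩
    refine limsup_le_of_le (isCoboundedUnder_kExpNorm_rpow μ _) ?_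
    filter_upwards [eventually_ne_atTop 0] with k hk
    exact kExpNorm_rpow_le hC hb p.succ_ne_zero hk

/-- A product of matrices which are dominated, up to the factor `t`, with probability at least `δ`
gives a lower bound for the moments of random products. -/
lemma pow_mul_pow_le_kExpNorm (hC : 0 ≤ C) (hb : ∀ A ∈ msupport μ, opNorm A ≤ C)
    {K : Set (EucSp m)} (hK : IsProperCone K) {c : ℝ} (hc : 0 < c)
    (hmono : ∀ A B : Mat m, LeavesInv B K → LeavesInv (A - B) K → opNorm B ≤ c * opNorm A)
    {t δ : ℝ} (ht : 0 ≤ t) (hδ : 0 ≤ δ) (p : ℕ) {k : ℕ} (M : Fin k → Mat m)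
    (hM : ∀ i, LeavesInv (M i) K)
    (hδM : ∀ i, ENNReal.ofReal δ ≤ μ (matSSet K (t • M i))) :
    (t ^ k * opNorm (prodRev M) / c) ^ p * δ ^ k ≤ kExpNorm μ p k := by
  set a := t ^ k * opNorm (prodRev M) / c with ha
  have ha0 : 0 ≤ a := div_nonneg (mul_nonneg (pow_nonneg ht k) (opNorm_nonneg _)) hc.le
  have hsub : Set.univ.pi (fun i => matSSet K (t • M i)) ⊆
      {f : Fin k → Mat m | a ^ p ≤ opNorm (prodRev f) ^ p} := fun f hf => by
    obtain ⟨h1, h2⟩ := leavesInv_prodRev_sub hK f (fun i => t • M i)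
      (fun i => (hM i).smul hK ht) (fun i => hf i (Set.mem_univ i))
    have h3 := hmono _ _ h1 h2
    rw [prodRev_smul, opNorm_smul, abs_of_nonneg (pow_nonneg ht k)] at h3
    exact pow_le_pow_left₀ ha0 ((div_le_iff₀' hc).2 h3) p
  have hmeas : ENNReal.ofReal (δ ^ k) ≤
      (Measure.pi fun _ : Fin k => μ) {f | a ^ p ≤ opNorm (prodRev f) ^ p} := by
    refine le_trans ?_ (measure_mono hsub)
    rw [Measure.pi_pi, ENNReal.ofReal_pow hδ]
    simpa using Finset.prod_le_prod' (s := Finset.univ) fun i _ => hδM i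
  refine le_trans ?_ (mul_meas_ge_le_integral_of_nonneg
    (Eventually.of_forall fun f => pow_nonneg (opNorm_nonneg _) p)
    (integrable_opNorm_prodRev_pow hC hb p k) (a ^ p))
  refine mul_le_mul_of_nonneg_left ?_ (pow_nonneg ha0 p)
  exact (ENNReal.ofReal_le_iff_le_toReal (measure_ne_top _ _)).1 hmeas

end Moments

lemma jsr_le_of_forall_opNorm_le {m : ℕ} {N : Set (Mat m)} {c q : ℝ} (hc : 0 < c) (hq : 0 ≤ q)
    (h : ∀ᶠ k : ℕ in atTop, ∀ f : Fin k → Mat m, (∀ i, f i ∈ N) →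
      opNorm (prodRev f) ≤ c * q ^ k) : jsr N ≤ q := by
  have hlim : Tendsto (fun k : ℕ => c ^ ((1 : ℝ) / k) * q) atTop (𝓝 q) := by
    have h1 := (tendsto_const_nhds (x := c)).rpow tendsto_one_div_atTop_nhds_zero_nat
      (Or.inl hc.ne')
    simpa using h1.mul_const q
  have hnonneg : ∀ k : ℕ, 0 ≤ sSup {x : ℝ | ∃ f : Fin k → Mat m,
      (∀ i, f i ∈ N) ∧ x = opNorm (prodRev f)} := fun k =>
    Real.sSup_nonneg (by rintro _ ⟨f, -, rfl⟩; exact opNorm_nonneg _)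
  rw [← hlim.limsup_eq]
  refine limsup_le_limsup ?_
    (isCoboundedUnder_le_of_le atTop (x := 0) fun k => Real.rpow_nonneg (hnonneg k) _)
    hlim.isBoundedUnder_le
  filter_upwards [h, eventually_ne_atTop 0] with k hk hk0
  have hsup : sSup {x : ℝ | ∃ f : Fin k → Mat m,
      (∀ i, f i ∈ N) ∧ x = opNorm (prodRev f)} ≤ c * q ^ k :=
    Real.sSup_le (by rintro _ ⟨f, hf, rfl⟩; exact hk f hf) (by positivity)
  refine (Real.rpow_le_rpow (hnonneg k) hsup (by positivity)).trans_eq ?_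
  rw [Real.mul_rpow hc.le (by positivity), one_div, Real.pow_rpow_inv_natCast hq hk0]

lemma jsr_mul_le_pRadius {m : ℕ} {μ : Measure (Mat m)} [IsProbabilityMeasure μ] {C : ℝ}
    (hC : 0 ≤ C) (hb : ∀ A ∈ msupport μ, opNorm A ≤ C) {K : Set (EucSp m)}
    (hK : IsProperCone K) {N : Set (Mat m)} (hN : SetLeavesInv N K) {t δ : ℝ} (ht : 0 < t)
    (hδ : 0 < δ) (hδN : ∀ M ∈ N, ENNReal.ofReal δ ≤ μ (matSSet K (t • M))) {p : ℕ}
    (hp : p ≠ 0) : jsr N * (δ ^ ((1 : ℝ) / p) * t) ≤ pRadius μ p := by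
  obtain ⟨c, hc, hmono⟩ := hK.exists_opNorm_le_mul
  set D := δ ^ ((1 : ℝ) / p) with hDdef
  have hD : 0 < D := Real.rpow_pos_of_pos hδ _
  have hDp : D ^ p = δ := by
    rw [hDdef, one_div]
    exact Real.rpow_inv_natCast_pow hδ.le hp
  refine le_of_forall_gt_imp_ge_of_dense fun r hr => ?_
  have hev := eventually_lt_of_limsup_lt hr (isBoundedUnder_kExpNorm_rpow hC hb hp)
  have hr0 : 0 < r := by
    obtain ⟨k, hk⟩ := hev.exists
    exact (Real.rpow_nonneg (kExpNorm_nonneg μ p k) _).trans_lt hk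
  refine (le_div_iff₀ (mul_pos hD ht)).1 (jsr_le_of_forall_opNorm_le hc (by positivity) ?_)
  filter_upwards [hev, eventually_ne_atTop 0] with k hk hk0 M hM
  have hE : kExpNorm μ p k ≤ r ^ (p * k) := by
    have h := pow_le_pow_left₀ (Real.rpow_nonneg (kExpNorm_nonneg μ p k) _) hk.le (p * k)
    rwa [one_div, ← Nat.cast_mul, Real.rpow_inv_natCast_pow (kExpNorm_nonneg μ p k)
      (by positivity)] at h
  have hlow := (pow_mul_pow_le_kExpNorm hC hb hK hc hmono ht.le hδ.le p M
    (fun i => hN _ (hM i)) (fun i => hδN _ (hM i))).trans hE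
  rw [← hDp, ← pow_mul, mul_comm p k, pow_mul, pow_mul, ← mul_pow] at hlow
  have h := le_of_pow_le_pow_left₀ hp (by positivity) hlow
  rw [div_pow, mul_pow, mul_div_assoc', le_div_iff₀ (by positivity)]
  rw [div_mul_eq_mul_div, div_le_iff₀ hc] at h
  linarith

/-- If `N ⊆ supp μ` is a measurable nonempty set such that for every `ε > 0`
there is a uniform `δ > 0` with `μ(S_{(1−ε)M}) ≥ δ` for all `M ∈ N`, then
`ρ̂(N) ≤ lim_{p→∞} ρ_{p,μ}`. -/
theorem stmt5 (n : ℕ) (hn : 1 ≤ n) (μ : Measure (Mat n)) [IsProbabilityMeasure μ]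
    (hbdd : HasBoundedSupport μ)
    (K : Set (EucSp n)) (hK : IsProperCone K) (hinv : SetLeavesInv (msupport μ) K)
    (N : Set (Mat n)) (hNsub : N ⊆ msupport μ) (hNmeas : MeasurableSet N) (hNne : N.Nonempty)
    (hunif : ∀ ε : ℝ, 0 < ε → ∃ δ : ℝ, 0 < δ ∧
      ∀ M ∈ N, ENNReal.ofReal δ ≤ μ (matSSet K ((1 - ε) • M))) :
    ∃ L : ℝ, Tendsto (fun p : ℕ => pRadius μ p) atTop (𝓝 L) ∧ jsr N ≤ L := by
  obtain ⟨C₀, hC₀⟩ := hbdd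
  have hC : 0 ≤ max C₀ 0 := le_max_right _ _
  have hb : ∀ A ∈ msupport μ, opNorm A ≤ max C₀ 0 := fun A hA =>
    (hC₀ A hA).trans (le_max_left _ _)
  obtain ⟨L, hL⟩ := exists_tendsto_pRadius hC hb
  refine ⟨L, hL, ?_⟩
  have hscaled : ∀ ε : ℝ, 0 < ε → ε < 1 → jsr N * (1 - ε) ≤ L := fun ε hε hε1 => by
    obtain ⟨δ, hδ, hδN⟩ := hunif ε hε
    have hlim : Tendsto (fun p : ℕ => jsr N * (δ ^ ((1 : ℝ) / p) * (1 - ε))) atTop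
        (𝓝 (jsr N * (1 - ε))) := by
      have h1 := (tendsto_const_nhds (x := δ)).rpow tendsto_one_div_atTop_nhds_zero_nat
        (Or.inl hδ.ne')
      simpa using (h1.mul_const (1 - ε)).const_mul (jsr N)
    refine le_of_tendsto_of_tendsto hlim hL ?_
    filter_upwards [eventually_ne_atTop 0] with p hp
    exact jsr_mul_le_pRadius hC hb hK (fun A hA => hinv A (hNsub hA)) (sub_pos.2 hε1) hδ hδN hp
  have hlim : Tendsto (fun ε : ℝ => jsr N * (1 - ε)) (𝓝[>] 0) (𝓝 (jsr N)) := by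
    have h : Continuous fun ε : ℝ => jsr N * (1 - ε) := by fun_prop
    simpa using (h.tendsto 0).mono_left nhdsWithin_le_nhds
  refine le_of_tendsto hlim ?_
  filter_upwards [Ioo_mem_nhdsGT (zero_lt_one' ℝ)] with ε hε using hscaled ε hε.1 hε.2

end
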